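/- Let P ⊆ Φ_{B_n} be a signed poset and suppose there are linearly independent vectors β_1, …, β_n ∈ P with K^rt_P = {c_1β_1 + ⋯ + c_nβ_n : c_1,…,c_n ≥ 0} (so the root cone is pointed, full-dimensional and simplicial). Then for every x ∈ ℝ^n with ⟨x, β_i⟩ > 0 for all 1 ≤ i ≤ n and ⟨x, w(α_j)⟩ ≠ 0 for all w ∈ 𝓛(P) and all 1 ≤ j ≤ n: Σ_{w ∈ 𝓛(P)} ∏_{j=1}^n ⟨x, w(α_j)⟩^{−1} = |det(β_1, …, β_n)| · ∏_{i=1}^n ⟨x, β_i⟩^{−1}, where det(β_1,…,β_n) is the determinant of the n × n matrix whose columns are β_1,…,β_n. -/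

import Mathlib

open scoped Classical

noncomputable section

/-- Signed index set `±[n]`: `(true, i)` represents `+i`, `(false, i)` represents `-i`. -/
abbrev SIdx (n : ℕ) := Bool × Fin n

/-- Negation `a ↦ -a` on `±[n]`. -/
def negS {n : ℕ} (a : SIdx n) : SIdx n := (!a.1, a.2)

/-- Standard basis vector `e_i` of `ℝ^n`. -/
def stdB (n : ℕ) (i : Fin n) : Fin n → ℝ := Pi.single i 1

/-- `rsgn true = 1`, `rsgn false = -1`. -/
def rsgn (s : Bool) : ℝ := if s then 1 else -1

/-- `v(a)` for `a ∈ ±[n]`: `v(+i) = e_i`, `v(-i) = -e_i`. -/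
def vS {n : ℕ} (a : SIdx n) : Fin n → ℝ := rsgn a.1 • stdB n a.2

/-- `v` on `±[n] ∪ {0}` (with `none` playing the role of `0`). -/
def vO {n : ℕ} : Option (SIdx n) → (Fin n → ℝ)
  | none => 0
  | some a => vS a

/-- Negation on `±[n] ∪ {0}`, fixing `0`. -/
def negO {n : ℕ} : Option (SIdx n) → Option (SIdx n)
  | none => none
  | some a => some (negS a)

/-- Standard inner product on `ℝ^n`. -/
def dotR {n : ℕ} (x y : Fin n → ℝ) : ℝ := ∑ i, x i * y i

/-- The type `B_n` root system `Φ_{B_n}`. -/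
def BnRoots (n : ℕ) : Set (Fin n → ℝ) :=
  {α | (∃ i j : Fin n, i < j ∧ ∃ s t : Bool, α = rsgn s • stdB n i + rsgn t • stdB n j) ∨
    ∃ i : Fin n, ∃ s : Bool, α = rsgn s • stdB n i}

/-- The positive roots `Φ⁺_{B_n}`. -/
def BnPos (n : ℕ) : Set (Fin n → ℝ) :=
  {α | (∃ i j : Fin n, i < j ∧ ∃ t : Bool, α = stdB n i + rsgn t • stdB n j) ∨
    ∃ i : Fin n, α = stdB n i}

/-- The type `C_n` root system `Φ_{C_n}`. -/
def CnRoots (n : ℕ) : Set (Fin n → ℝ) :=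
  {α | (∃ i j : Fin n, i < j ∧ ∃ s t : Bool, α = rsgn s • stdB n i + rsgn t • stdB n j) ∨
    ∃ i : Fin n, ∃ s : Bool, α = (2 * rsgn s) • stdB n i}

/-- Nonnegative real linear combinations of elements of `S`. -/
def nnSpan {n : ℕ} (S : Set (Fin n → ℝ)) : Set (Fin n → ℝ) :=
  {x | ∃ (r : ℕ) (c : Fin r → ℝ) (β : Fin r → (Fin n → ℝ)),
    (∀ m, 0 ≤ c m) ∧ (∀ m, β m ∈ S) ∧ x = ∑ m, c m • β m}

/-- A signed poset: a subset of `Φ_{B_n}`, antisymmetric and closed under positive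
linear combinations remaining in `Φ_{B_n}`. -/
def IsSignedPoset (n : ℕ) (P : Set (Fin n → ℝ)) : Prop :=
  P ⊆ BnRoots n ∧ (∀ α ∈ P, -α ∉ P) ∧ ∀ α ∈ BnRoots n, α ∈ nnSpan P → α ∈ P

/-- A `C_n`-signed poset. -/
def IsCnSignedPoset (n : ℕ) (Q : Set (Fin n → ℝ)) : Prop :=
  Q ⊆ CnRoots n ∧ (∀ α ∈ Q, -α ∉ Q) ∧ ∀ α ∈ CnRoots n, α ∈ nnSpan Q → α ∈ Q

/-- The root cone `K^rt_P`. -/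
def rootCone {n : ℕ} (P : Set (Fin n → ℝ)) : Set (Fin n → ℝ) := nnSpan P

/-- The weight cone `K^wt_P`. -/
def weightCone {n : ℕ} (P : Set (Fin n → ℝ)) : Set (Fin n → ℝ) :=
  {f | ∀ α ∈ P, 0 ≤ dotR f α}

/-- The Fischer (strict) order on `±[n] ∪ {0}`:
`a < b` iff `v(a) - v(b) ∈ P`, or (`b = -a ≠ 0` and `v(a) ∈ P`). -/
def fLT {n : ℕ} (P : Set (Fin n → ℝ)) (a b : Option (SIdx n)) : Prop :=
  vO a - vO b ∈ P ∨ (a ≠ none ∧ b = negO a ∧ vO a ∈ P)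

/-- A subset of `±[n]` is isotropic if it contains no pair `{i, -i}`. -/
def Isotropic {n : ℕ} (J : Finset (SIdx n)) : Prop :=
  ∀ i : Fin n, ¬((true, i) ∈ J ∧ (false, i) ∈ J)

/-- Signed characteristic vector of a subset of `±[n]`. -/
def chiF {n : ℕ} (J : Finset (SIdx n)) : Fin n → ℝ := fun i =>
  if (true, i) ∈ J then 1 else if (false, i) ∈ J then -1 else 0

/-- `J` is an ideal of the signed poset `P`. -/
def IsIdeal {n : ℕ} (P : Set (Fin n → ℝ)) (J : Finset (SIdx n)) : Prop :=
  Isotropic J ∧ ∀ α ∈ P, 0 ≤ dotR (chiF J) α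

/-- Comparability in the Fischer order of `P`. -/
def fComp {n : ℕ} (P : Set (Fin n → ℝ)) (a b : SIdx n) : Prop :=
  fLT P (some a) (some b) ∨ fLT P (some b) (some a)

/-- One step in the comparability graph on a subset `J` of `±[n]`. -/
def connStep {n : ℕ} (P : Set (Fin n → ℝ)) (J : Finset (SIdx n)) (a b : SIdx n) : Prop :=
  a ∈ J ∧ b ∈ J ∧ fComp P a b

/-- `J` is connected: nonempty, and any two of its elements are joined by a path inside `J`
in the comparability graph of the Fischer order of `P`. -/
def IsConnectedIdl {n : ℕ} (P : Set (Fin n → ℝ)) (J : Finset (SIdx n)) : Prop :=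
  J.Nonempty ∧ ∀ a ∈ J, ∀ b ∈ J, Relation.ReflTransGen (connStep P J) a b

/-- A connected ideal of `P`. -/
def IsConnIdeal {n : ℕ} (P : Set (Fin n → ℝ)) (J : Finset (SIdx n)) : Prop :=
  IsIdeal P J ∧ IsConnectedIdl P J

/-- Support `supp J = {|a| : a ∈ J}`. -/
def suppF {n : ℕ} (J : Finset (SIdx n)) : Finset (Fin n) := J.image Prod.snd

/-- `J` and `K` intersect nontrivially. -/
def NontrivInter {n : ℕ} (J K : Finset (SIdx n)) : Prop :=
  (suppF J ∩ suppF K).Nonempty ∧ ¬J ⊆ K ∧ ¬K ⊆ J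

/-- `J` and `K` intersect trivially. -/
def TrivInter {n : ℕ} (J K : Finset (SIdx n)) : Prop := ¬NontrivInter J K

/-- A signed permutation, as an anti-symmetric bijection of `±[n]`. -/
def IsSPerm {n : ℕ} (w : SIdx n ≃ SIdx n) : Prop := ∀ a, w (negS a) = negS (w a)

/-- Linear action of a signed permutation on `ℝ^n`, determined by `w(e_i) = v(w(+i))`. -/
def spAct {n : ℕ} (w : SIdx n ≃ SIdx n) (x : Fin n → ℝ) : Fin n → ℝ :=
  ∑ i, x i • vS (w (true, i))

/-- `w` is a linear extension of `P`: a signed permutation with `P ⊆ w(Φ⁺_{B_n})`. -/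
def IsLinExt {n : ℕ} (P : Set (Fin n → ℝ)) (w : SIdx n ≃ SIdx n) : Prop :=
  IsSPerm w ∧ ∀ α ∈ P, ∃ β ∈ BnPos n, α = spAct w β

/-- The (finite) set `𝓛(P)` of linear extensions of `P`. -/
def linExts (n : ℕ) (P : Set (Fin n → ℝ)) : Finset (SIdx n ≃ SIdx n) :=
  Finset.univ.filter (IsLinExt P)

/-- Simple roots of `Φ_{B_n}`: `α_i = e_i - e_{i+1}` for `i < n - 1`, `α_{n-1} = e_{n-1}`
(0-indexed). -/
def simpleRoot (n : ℕ) (i : Fin n) : Fin n → ℝ := fun j =>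
  (if j = i then (1 : ℝ) else 0) - if (j : ℕ) = (i : ℕ) + 1 then 1 else 0

/-- `J^w_m = {w(1), …, w(m)}` (0-indexed: the images under `w` of `+1, …, +(m+1)`). -/
def JwSet {n : ℕ} (w : SIdx n ≃ SIdx n) (m : Fin n) : Finset (SIdx n) :=
  (Finset.univ.filter (fun j : Fin n => j ≤ m)).image (fun j => w (true, j))

/-- An extensible ideal of `P`. -/
def Extensible (n : ℕ) (P : Set (Fin n → ℝ)) (J : Finset (SIdx n)) : Prop :=
  ∃ I : Finset (SIdx n), I.Nonempty ∧ Disjoint I J ∧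
    IsIdeal P (J ∪ I) ∧ IsIdeal P (J ∪ I.image negS)

/-- The finite set `J_conn(P)` of connected ideals of `P`. -/
def JconnF (n : ℕ) (P : Set (Fin n → ℝ)) : Finset (Finset (SIdx n)) :=
  Finset.univ.filter (IsConnIdeal P)

/-- Membership in `Π(P)`: an unordered pair of nontrivially intersecting connected ideals. -/
def inPiP {n : ℕ} (P : Set (Fin n → ℝ)) (p : Sym2 (Finset (SIdx n))) : Prop :=
  ∃ J K : Finset (SIdx n),
    p = s(J, K) ∧ IsConnIdeal P J ∧ IsConnIdeal P K ∧ NontrivInter J K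

/-- The finite set `Π(P)` of unordered pairs of nontrivially intersecting connected ideals. -/
def PiP (n : ℕ) (P : Set (Fin n → ℝ)) : Finset (Sym2 (Finset (SIdx n))) :=
  Finset.univ.filter (inPiP P)

/-- No connected ideal of `P` intersects two or more other connected ideals nontrivially. -/
def NoDoubleNontriv (n : ℕ) (P : Set (Fin n → ℝ)) : Prop :=
  ∀ J K K' : Finset (SIdx n), IsConnIdeal P J → IsConnIdeal P K → IsConnIdeal P K' →
    NontrivInter J K → NontrivInter J K' → K = K'

/-- The connected component of `a` inside `J` (w.r.t. the Fischer comparability graph). -/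
def componentIn {n : ℕ} (P : Set (Fin n → ℝ)) (J : Finset (SIdx n)) (a : SIdx n) :
    Finset (SIdx n) :=
  J.filter (fun b => Relation.ReflTransGen (connStep P J) a b)

/-- The set of connected components of `J`. -/
def componentsOf {n : ℕ} (P : Set (Fin n → ℝ)) (J : Finset (SIdx n)) :
    Finset (Finset (SIdx n)) :=
  J.image (componentIn P J)

/-- The signed support `supp±(f) = {sgn(f_i)·i : f_i ≠ 0}` of a vector `f ∈ ℝ^n`. -/
def suppPM {n : ℕ} (f : Fin n → ℝ) : Finset (SIdx n) :=
  Finset.univ.filter (fun a : SIdx n => if a.1 then 0 < f a.2 else f a.2 < 0)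

/-- Index type for the variables `U_J`, `J` a connected ideal of `P`. -/
abbrev ConnIdx (n : ℕ) (P : Set (Fin n → ℝ)) := {J : Finset (SIdx n) // IsConnIdeal P J}

/-- Integer signed characteristic vector, as an exponent vector for Laurent monomials. -/
def chiZ {n : ℕ} (J : Finset (SIdx n)) : Fin n →₀ ℤ :=
  Finsupp.equivFunOnFinite.symm (fun i =>
    if (true, i) ∈ J then 1 else if (false, i) ∈ J then -1 else 0)

/-- The map `φ : k[U_J : J ∈ J_conn(P)] → k[x_1^{±1}, …, x_n^{±1}]`, `U_J ↦ x^{χ_J}`. -/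
def phiWt (n : ℕ) (P : Set (Fin n → ℝ)) (k : Type) [Field k] :
    MvPolynomial (ConnIdx n P) k →ₐ[k] AddMonoidAlgebra k (Fin n →₀ ℤ) :=
  MvPolynomial.aeval (fun J => AddMonoidAlgebra.single (chiZ J.val) 1)

/-- The binomial `syz(U_J, U_K) = U_J U_K - (∏_A U_A) (∏_B U_B)`, where `A` runs over the
connected components of `J ∩ K` and `B` over the connected components of `supp±(χ_J + χ_K)`. -/
def syzPoly (n : ℕ) (P : Set (Fin n → ℝ)) (k : Type) [Field k] (J K : ConnIdx n P) :
    MvPolynomial (ConnIdx n P) k :=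
  MvPolynomial.X J * MvPolynomial.X K -
    (∏ A ∈ Finset.univ.filter
        (fun A : ConnIdx n P => (A : Finset (SIdx n)) ∈ componentsOf P (J.val ∩ K.val)),
        MvPolynomial.X A) *
      ∏ B ∈ Finset.univ.filter
        (fun B : ConnIdx n P =>
          (B : Finset (SIdx n)) ∈ componentsOf P (suppPM (chiF J.val + chiF K.val))),
        MvPolynomial.X B

/-- `θ_1, …, θ_r` is a regular sequence: the ideal it generates is proper, and each `θ_{m+1}`
is a non-zero-divisor modulo the ideal generated by `θ_1, …, θ_m`. -/
def IsRegSeq {R : Type} [CommRing R] {r : ℕ} (θ : Fin r → R) : Prop :=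
  Ideal.span (Set.range θ) ≠ ⊤ ∧
    ∀ (m : ℕ) (hm : m < r) (x : R),
      θ ⟨m, hm⟩ * x ∈ Ideal.span (θ '' {j : Fin r | (j : ℕ) < m}) →
        x ∈ Ideal.span (θ '' {j : Fin r | (j : ℕ) < m})

/-- The induced signed poset `P_A = P ∩ span_ℝ{e_i : i ∈ A}`. -/
def inducedPoset (n : ℕ) (P : Set (Fin n → ℝ)) (A : Finset (Fin n)) : Set (Fin n → ℝ) :=
  {α | α ∈ P ∧ α ∈ Submodule.span ℝ (stdB n '' (A : Set (Fin n)))}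

/-- The major index of a signed permutation. -/
def majB {n : ℕ} (w : SIdx n ≃ SIdx n) : ℕ :=
  ∑ i ∈ Finset.univ.filter
      (fun i : Fin n => spAct w (simpleRoot n i) ∉ BnPos n), ((i : ℕ) + 1)

/-- `[m]_q = 1 + q + ⋯ + q^{m-1}` in `ℤ[q]`. -/
def qInt (m : ℕ) : Polynomial ℤ := ∑ t ∈ Finset.range m, Polynomial.X ^ t

/-- The symmetric function `{J, K} ↦ ⟨x, χ_J + χ_K⟩` on unordered pairs. -/
def pairDot {n : ℕ} (x : Fin n → ℝ) : Sym2 (Finset (SIdx n)) → ℝ :=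
  Sym2.lift ⟨fun J K => dotR x (chiF J + chiF K),
    fun J K => congrArg (dotR x) (add_comm (chiF J) (chiF K))⟩

/-- The symmetric function `{J, K} ↦ [|J| + |K|]_q` on unordered pairs. -/
def pairQ {n : ℕ} : Sym2 (Finset (SIdx n)) → Polynomial ℤ :=
  Sym2.lift ⟨fun J K => qInt (J.card + K.card),
    fun J K => congrArg qInt (Nat.add_comm J.card K.card)⟩

/-- The principal order ideal `I_≤(a)` in the Fischer order restricted to `±[n]`. -/
def Ile {n : ℕ} (P : Set (Fin n → ℝ)) (a : SIdx n) : Set (SIdx n) :=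
  {b | b = a ∨ fLT P (some b) (some a)}

/-- A set of signed indices is isotropic if it contains no pair `{i, -i}`. -/
def IsoSet {n : ℕ} (S : Set (SIdx n)) : Prop :=
  ∀ i : Fin n, ¬((true, i) ∈ S ∧ (false, i) ∈ S)

/-- A covering pair of the Fischer order of `P`. -/
def CovPair {n : ℕ} (P : Set (Fin n → ℝ)) (a b : Option (SIdx n)) : Prop :=
  fLT P a b ∧ ¬∃ c : Option (SIdx n), fLT P a c ∧ fLT P c b

/-- The set of covering roots of `P`. -/
def covRoots {n : ℕ} (P : Set (Fin n → ℝ)) : Set (Fin n → ℝ) :=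
  {x | ∃ a b : Option (SIdx n), CovPair P a b ∧ x = vO a - vO b}

/-- The set `J_ε = {i : ε_i = 1} ∪ {-i : ε_i = -1}` attached to a `{-1,0,1}`-vector. -/
def Jeps {n : ℕ} (ε : Fin n → ℝ) : Set (SIdx n) :=
  {a | (a.1 = true ∧ ε a.2 = 1) ∨ (a.1 = false ∧ ε a.2 = -1)}

namespace SP

theorem dot_add {n : ℕ} (x y z : Fin n → ℝ) : dotR x (y + z) = dotR x y + dotR x z :=
  dotProduct_add x y z
theorem dot_smul {n : ℕ} (x : Fin n → ℝ) (a : ℝ) (y : Fin n → ℝ) :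
    dotR x (a • y) = a * dotR x y := dotProduct_smul a x y
theorem dot_neg {n : ℕ} (x y : Fin n → ℝ) : dotR x (-y) = - dotR x y := dotProduct_neg x y
theorem dot_sub {n : ℕ} (x y z : Fin n → ℝ) : dotR x (y - z) = dotR x y - dotR x z :=
  dotProduct_sub x y z
theorem dot_comm {n : ℕ} (x y : Fin n → ℝ) : dotR x y = dotR y x := dotProduct_comm x y
theorem add_dot {n : ℕ} (x y z : Fin n → ℝ) : dotR (x + y) z = dotR x z + dotR y z :=
  add_dotProduct x y z
theorem smul_dot {n : ℕ} (a : ℝ) (x y : Fin n → ℝ) :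
    dotR (a • x) y = a * dotR x y := smul_dotProduct a x y
theorem dot_sum {n : ℕ} {ι : Type*} (s : Finset ι) (x : Fin n → ℝ) (f : ι → Fin n → ℝ) :
    dotR x (∑ i ∈ s, f i) = ∑ i ∈ s, dotR x (f i) := dotProduct_sum x s f
theorem sum_dot {n : ℕ} {ι : Type*} (s : Finset ι) (x : Fin n → ℝ) (f : ι → Fin n → ℝ) :
    dotR (∑ i ∈ s, f i) x = ∑ i ∈ s, dotR (f i) x := sum_dotProduct s f x
theorem dot_stdB {n : ℕ} (x : Fin n → ℝ) (i : Fin n) : dotR x (stdB n i) = x i := by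
  simp [dotR, stdB, Pi.single_apply]
theorem dot_vS {n : ℕ} (x : Fin n → ℝ) (a : SIdx n) : dotR x (vS a) = rsgn a.1 * x a.2 := by
  rw [vS, dot_smul, dot_stdB]

theorem vS_true {n : ℕ} (i : Fin n) : vS (true, i) = stdB n i := by simp [vS, rsgn]
theorem vS_negS {n : ℕ} (a : SIdx n) : vS (negS a) = - vS a := by
  rcases a with ⟨s, i⟩
  cases s <;> simp [vS, negS, rsgn]
theorem negS_negS {n : ℕ} (a : SIdx n) : negS (negS a) = a := by simp [negS]
theorem eq_or_neg {n : ℕ} (a b : SIdx n) (h : a.2 = b.2) : a = b ∨ a = negS b := by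
  rcases a with ⟨s, i⟩
  rcases b with ⟨t, j⟩
  simp only at h
  subst h
  cases s <;> cases t <;> simp [negS]
theorem vS_dot_vS {n : ℕ} (a b : SIdx n) (h : a.2 ≠ b.2) : dotR (vS a) (vS b) = 0 := by
  rw [dot_vS]
  simp [vS, stdB, h.symm]
theorem vS_dot_self {n : ℕ} (a : SIdx n) : dotR (vS a) (vS a) = 1 := by
  rw [dot_vS]
  rcases a with ⟨s, i⟩
  cases s <;> simp [vS, stdB, rsgn]

theorem spAct_add {n : ℕ} (w : SIdx n ≃ SIdx n) (x y : Fin n → ℝ) :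
    spAct w (x + y) = spAct w x + spAct w y := by
  simp [spAct, add_smul, Finset.sum_add_distrib]
theorem spAct_smul {n : ℕ} (w : SIdx n ≃ SIdx n) (a : ℝ) (x : Fin n → ℝ) :
    spAct w (a • x) = a • spAct w x := by
  simp [spAct, Finset.smul_sum, smul_smul]
theorem spAct_neg {n : ℕ} (w : SIdx n ≃ SIdx n) (x : Fin n → ℝ) :
    spAct w (-x) = - spAct w x := by
  simp [spAct]
theorem spAct_stdB {n : ℕ} (w : SIdx n ≃ SIdx n) (i : Fin n) :
    spAct w (stdB n i) = vS (w (true, i)) := by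
  simp [spAct, stdB, Pi.single_apply]
theorem spAct_vS {n : ℕ} (w : SIdx n ≃ SIdx n) (hw : IsSPerm w) (a : SIdx n) :
    spAct w (vS a) = vS (w a) := by
  rcases a with ⟨s, i⟩
  cases s
  · have h1 : ((false, i) : SIdx n) = negS (true, i) := by simp [negS]
    rw [h1, vS_negS, spAct_neg, vS_true, spAct_stdB, hw, vS_negS]
  · rw [vS_true, spAct_stdB]

theorem sperm_symm {n : ℕ} {w : SIdx n ≃ SIdx n} (hw : IsSPerm w) : IsSPerm w.symm := by
  intro a
  apply w.injective
  rw [hw]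
  simp

theorem sperm_snd {n : ℕ} {w : SIdx n ≃ SIdx n} (hw : IsSPerm w) {a b : SIdx n}
    (h : a.2 ≠ b.2) : (w a).2 ≠ (w b).2 := by
  intro h'
  rcases eq_or_neg _ _ h' with h1 | h1
  · exact h (by rw [w.injective h1])
  · rw [← hw] at h1
    apply h
    rw [w.injective h1]
    simp [negS]

theorem spAct_dot {n : ℕ} {w : SIdx n ≃ SIdx n} (hw : IsSPerm w) (x y : Fin n → ℝ) :
    dotR (spAct w x) (spAct w y) = dotR x y := by
  have h : ∀ i j : Fin n, dotR (vS (w (true, i))) (vS (w (true, j))) = if i = j then 1 else 0 := by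
    intro i j
    split_ifs with hij
    · subst hij
      exact vS_dot_self _
    · exact vS_dot_vS _ _ (sperm_snd hw hij)
  unfold spAct
  rw [sum_dot]
  simp only [dot_sum, smul_dot, dot_smul, h]
  simp [dotR, mul_comm]

theorem spAct_eq_sum {n : ℕ} (x : Fin n → ℝ) : x = ∑ i, x i • stdB n i := by
  ext j
  simp [stdB, Pi.single_apply]

theorem spAct_sum {n : ℕ} {ι : Type*} (s : Finset ι) (w : SIdx n ≃ SIdx n)
    (f : ι → Fin n → ℝ) : spAct w (∑ i ∈ s, f i) = ∑ i ∈ s, spAct w (f i) := by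
  simp only [spAct, Finset.sum_apply, Finset.sum_smul]
  rw [Finset.sum_comm]

theorem spAct_symm_spAct {n : ℕ} {w : SIdx n ≃ SIdx n} (hw : IsSPerm w) (x : Fin n → ℝ) :
    spAct w.symm (spAct w x) = x := by
  conv_rhs => rw [spAct_eq_sum x]
  rw [show spAct w x = ∑ i, x i • vS (w (true, i)) from rfl, spAct_sum]
  refine Finset.sum_congr rfl fun i _ => ?_
  rw [spAct_smul, spAct_vS _ (sperm_symm hw), Equiv.symm_apply_apply, vS_true]

theorem spAct_spAct_symm {n : ℕ} {w : SIdx n ≃ SIdx n} (hw : IsSPerm w) (x : Fin n → ℝ) :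
    spAct w (spAct w.symm x) = x := by
  have := spAct_symm_spAct (sperm_symm hw) x
  simpa using this

theorem spAct_dot_left {n : ℕ} {w : SIdx n ≃ SIdx n} (hw : IsSPerm w) (x y : Fin n → ℝ) :
    dotR (spAct w x) y = dotR x (spAct w.symm y) := by
  rw [← spAct_dot hw x, spAct_spAct_symm hw]

/-- Roots in terms of `vS`. -/
theorem root_iff {n : ℕ} (γ : Fin n → ℝ) : γ ∈ BnRoots n ↔
    (∃ a b : SIdx n, a.2 ≠ b.2 ∧ γ = vS a + vS b) ∨ ∃ a : SIdx n, γ = vS a := by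
  constructor
  · rintro (⟨i, j, hij, s, t, rfl⟩ | ⟨i, s, rfl⟩)
    · exact Or.inl ⟨(s, i), (t, j), hij.ne, rfl⟩
    · exact Or.inr ⟨(s, i), rfl⟩
  · rintro (⟨a, b, hab, rfl⟩ | ⟨a, rfl⟩)
    · rcases lt_or_gt_of_ne hab with h | h
      · exact Or.inl ⟨a.2, b.2, h, a.1, b.1, rfl⟩
      · exact Or.inl ⟨b.2, a.2, h, b.1, a.1, add_comm _ _⟩
    · exact Or.inr ⟨a.2, a.1, rfl⟩

theorem root_neg {n : ℕ} {γ : Fin n → ℝ} (h : γ ∈ BnRoots n) : -γ ∈ BnRoots n := by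
  rw [root_iff] at h ⊢
  rcases h with ⟨a, b, hab, rfl⟩ | ⟨a, rfl⟩
  · refine Or.inl ⟨negS a, negS b, hab, ?_⟩
    rw [vS_negS, vS_negS, neg_add]
  · exact Or.inr ⟨negS a, (vS_negS a).symm⟩

theorem root_act {n : ℕ} {w : SIdx n ≃ SIdx n} (hw : IsSPerm w) {γ : Fin n → ℝ}
    (h : γ ∈ BnRoots n) : spAct w γ ∈ BnRoots n := by
  rw [root_iff] at h ⊢
  rcases h with ⟨a, b, hab, rfl⟩ | ⟨a, rfl⟩
  · exact Or.inl ⟨w a, w b, sperm_snd hw hab, by rw [spAct_add, spAct_vS w hw, spAct_vS w hw]⟩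
  · exact Or.inr ⟨w a, by rw [spAct_vS w hw]⟩

theorem pos_root {n : ℕ} {γ : Fin n → ℝ} (h : γ ∈ BnPos n) : γ ∈ BnRoots n := by
  rcases h with ⟨i, j, hij, t, rfl⟩ | ⟨i, rfl⟩
  · exact Or.inl ⟨i, j, hij, true, t, by simp [rsgn]⟩
  · exact Or.inr ⟨i, true, by simp [rsgn]⟩

theorem pos_or_neg {n : ℕ} {γ : Fin n → ℝ} (h : γ ∈ BnRoots n) :
    γ ∈ BnPos n ∨ -γ ∈ BnPos n := by
  rcases h with ⟨i, j, hij, s, t, rfl⟩ | ⟨i, s, rfl⟩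
  · cases s
    · right
      refine Or.inl ⟨i, j, hij, !t, ?_⟩
      cases t <;> simp [rsgn, add_comm]
    · left
      exact Or.inl ⟨i, j, hij, t, by simp [rsgn]⟩
  · cases s
    · right
      exact Or.inr ⟨i, by simp [rsgn]⟩
    · left
      exact Or.inr ⟨i, by simp [rsgn]⟩

/-- weakly dominant vectors -/
def Dom {n : ℕ} (y : Fin n → ℝ) : Prop := Antitone y ∧ ∀ i, 0 ≤ y i

theorem dom_nonneg {n : ℕ} {y : Fin n → ℝ} (hy : Dom y) {γ : Fin n → ℝ} (h : γ ∈ BnPos n) :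
    0 ≤ dotR y γ := by
  rcases h with ⟨i, j, hij, t, rfl⟩ | ⟨i, rfl⟩
  · rw [dot_add, dot_smul, dot_stdB, dot_stdB]
    have h1 := hy.1 hij.le
    have h2 := hy.2 i
    have h3 := hy.2 j
    cases t <;> simp [rsgn] <;> linarith
  · rw [dot_stdB]
    exact hy.2 i

theorem dom_pos {n : ℕ} {y : Fin n → ℝ} (hy : Dom y) {γ : Fin n → ℝ} (h : γ ∈ BnRoots n)
    (hp : 0 < dotR y γ) : γ ∈ BnPos n := by
  rcases pos_or_neg h with h1 | h1
  · exact h1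
  · have := dom_nonneg hy h1
    rw [dot_neg] at this
    linarith

def rho (n : ℕ) : Fin n → ℝ := fun i => (n : ℝ) - (i : ℕ)

theorem rho_pos {n : ℕ} (i : Fin n) : 0 < rho n i := by
  have : ((i : ℕ) : ℝ) < n := by exact_mod_cast i.2
  simp only [rho]
  linarith

theorem rho_lt {n : ℕ} {i j : Fin n} (h : i < j) : rho n j < rho n i := by
  have : ((i : ℕ) : ℝ) < (j : ℕ) := by exact_mod_cast h
  simp only [rho]
  linarith

theorem rho_dom (n : ℕ) : Dom (rho n) := by
  refine ⟨fun i j h => ?_, fun i => (rho_pos i).le⟩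
  rcases h.eq_or_lt with h | h
  · rw [h]
  · exact (rho_lt h).le

theorem rho_dot_pos {n : ℕ} {γ : Fin n → ℝ} (h : γ ∈ BnPos n) : 0 < dotR (rho n) γ := by
  rcases h with ⟨i, j, hij, t, rfl⟩ | ⟨i, rfl⟩
  · rw [dot_add, dot_smul, dot_stdB, dot_stdB]
    have h1 := rho_lt hij
    have h2 := rho_pos i
    have h3 := rho_pos j
    cases t <;> simp [rsgn] <;> linarith
  · rw [dot_stdB]
    exact rho_pos i

/-- the regular vector attached to `w` -/
def hv {n : ℕ} (w : SIdx n ≃ SIdx n) : Fin n → ℝ := spAct w (rho n)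

theorem hv_pos_iff {n : ℕ} {w : SIdx n ≃ SIdx n} (hw : IsSPerm w) {γ : Fin n → ℝ}
    (h : γ ∈ BnRoots n) : 0 < dotR (hv w) γ ↔ spAct w.symm γ ∈ BnPos n := by
  rw [hv, spAct_dot_left hw]
  exact ⟨dom_pos (rho_dom n) (root_act (sperm_symm hw) h), rho_dot_pos⟩

theorem hv_ne {n : ℕ} {w : SIdx n ≃ SIdx n} (hw : IsSPerm w) {γ : Fin n → ℝ}
    (h : γ ∈ BnRoots n) : dotR (hv w) γ ≠ 0 := by
  rw [hv, spAct_dot_left hw]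
  rcases pos_or_neg (root_act (sperm_symm hw) h) with h1 | h1
  · exact (rho_dot_pos h1).ne'
  · have := rho_dot_pos h1
    rw [dot_neg] at this
    linarith

theorem linExt_iff {n : ℕ} {P : Set (Fin n → ℝ)} (hP : P ⊆ BnRoots n) (w : SIdx n ≃ SIdx n) :
    IsLinExt P w ↔ IsSPerm w ∧ ∀ α ∈ P, 0 < dotR (hv w) α := by
  constructor
  · rintro ⟨hw, h⟩
    refine ⟨hw, fun α hα => ?_⟩
    rw [hv_pos_iff hw (hP hα)]
    obtain ⟨δ, hδ, rfl⟩ := h α hα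
    rwa [spAct_symm_spAct hw]
  · rintro ⟨hw, h⟩
    refine ⟨hw, fun α hα => ⟨_, (hv_pos_iff hw (hP hα)).1 (h α hα), ?_⟩⟩
    rw [spAct_spAct_symm hw]

theorem rho_inj {n : ℕ} {i j : Fin n} (h : rho n i = rho n j) : i = j := by
  rcases lt_trichotomy i j with h1 | h1 | h1
  · have := rho_lt h1
    linarith
  · exact h1
  · have := rho_lt h1
    linarith

theorem hv_inj {n : ℕ} {w w' : SIdx n ≃ SIdx n} (hw : IsSPerm w) (hw' : IsSPerm w')
    (h : hv w = hv w') : w = w' := by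
  have key : ∀ i : Fin n, w (true, i) = w' (true, i) := by
    intro i
    have h1 : dotR (hv w) (vS (w (true, i))) = rho n i := by
      rw [hv, ← spAct_vS w hw, spAct_dot hw, vS_true, dot_stdB]
    obtain ⟨⟨s, k⟩, hb⟩ : ∃ b, w' b = w (true, i) := ⟨w'.symm (w (true, i)), by simp⟩
    rw [h, ← hb, hv, ← spAct_vS w' hw', spAct_dot hw', dot_vS] at h1
    rw [← hb]
    have h2 := rho_pos i
    have h3 := rho_pos k
    cases s
    · simp [rsgn] at h1
      linarith
    · simp [rsgn] at h1
      rw [rho_inj h1]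
  ext1 ⟨s, i⟩
  cases s
  · have h1 : ((false, i) : SIdx n) = negS (true, i) := by simp [negS]
    rw [h1, hw, hw', key]
  · exact key i

/-- every vector can be moved to the dominant chamber -/
theorem exists_dom {n : ℕ} (y : Fin n → ℝ) :
    ∃ w : SIdx n ≃ SIdx n, IsSPerm w ∧ Dom (spAct w.symm y) := by
  let σ := Tuple.sort (fun i => -|y i|)
  have hσ : Monotone ((fun i => -|y i|) ∘ σ) := Tuple.monotone_sort _
  let f : SIdx n → SIdx n := fun a => (if 0 ≤ y (σ a.2) then a.1 else !a.1, σ a.2)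
  have hf : Function.Injective f := by
    rintro ⟨s, i⟩ ⟨t, j⟩ h
    simp only [f, Prod.mk.injEq, EmbeddingLike.apply_eq_iff_eq] at h
    obtain ⟨h1, rfl⟩ := h
    split_ifs at h1
    · rw [h1]
    · simp at h1
      rw [h1]
  let w : SIdx n ≃ SIdx n := Equiv.ofBijective f (Finite.injective_iff_bijective.1 hf)
  have hwf : ∀ a, w a = f a := fun a => rfl
  have hw : IsSPerm w := by
    intro a
    rw [hwf, hwf]
    simp only [f, negS]
    split_ifs <;> rfl
  have hz : ∀ i, spAct w.symm y i = |y (σ i)| := by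
    intro i
    rw [← dot_stdB (spAct w.symm y), spAct_dot_left (sperm_symm hw), Equiv.symm_symm, spAct_stdB,
      dot_vS, hwf]
    simp only [f]
    split_ifs with h
    · simp [rsgn, abs_of_nonneg h]
    · simp [rsgn, abs_of_neg (not_le.1 h)]
  refine ⟨w, hw, fun i j hij => ?_, fun i => ?_⟩
  · rw [hz, hz]
    have := hσ hij
    simp at this
    exact this
  · rw [hz]
    exact abs_nonneg _

theorem root_at {n : ℕ} {γ : Fin n → ℝ} (h : γ ∈ BnRoots n) (m : Fin n) (hm : γ m ≠ 0) :
    ∃ c : SIdx n, c.2 = m ∧ rsgn c.1 = γ m ∧ (γ = vS c ∨ ∃ b : SIdx n, b.2 ≠ m ∧ γ = vS c + vS b) := by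
  rw [root_iff] at h
  rcases h with ⟨a, b, hab, rfl⟩ | ⟨a, rfl⟩
  · by_cases h1 : a.2 = m
    · refine ⟨a, h1, ?_, Or.inr ⟨b, by rw [← h1]; exact hab.symm, rfl⟩⟩
      have : b.2 ≠ m := by rw [← h1]; exact hab.symm
      simp [vS, stdB, h1, this.symm]
    · by_cases h2 : b.2 = m
      · refine ⟨b, h2, ?_, Or.inr ⟨a, h1, add_comm _ _⟩⟩
        have : a.2 ≠ m := h1
        simp [vS, stdB, h2, this.symm]
      · exfalso
        apply hm
        have h1' : m ≠ a.2 := fun h => h1 h.symm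
        have h2' : m ≠ b.2 := fun h => h2 h.symm
        simp [vS, stdB, h1', h2']
  · by_cases h1 : a.2 = m
    · exact ⟨a, h1, by simp [vS, stdB, h1], Or.inl rfl⟩
    · exfalso
      apply hm
      have h1' : m ≠ a.2 := fun h => h1 h.symm
      simp [vS, stdB, h1']

theorem rsgn_inj {s t : Bool} (h : rsgn s = rsgn t) : s = t := by
  cases s <;> cases t <;> simp [rsgn] at h ⊢ <;> norm_num at h

theorem diff_root {n : ℕ} {γ γ' : Fin n → ℝ} (h : γ ∈ BnRoots n) (h' : γ' ∈ BnRoots n)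
    (hne : γ ≠ γ') (m : Fin n) (hm : γ m = γ' m) (h0 : γ m ≠ 0) :
    ∃ a : ℝ, 0 < a ∧ ∃ δ ∈ BnRoots n, γ = a • δ + γ' := by
  obtain ⟨c, hc, hs, hh⟩ := root_at h m h0
  obtain ⟨c', hc', hs', hh'⟩ := root_at h' m (hm ▸ h0)
  have hcc : c' = c := by
    apply Prod.ext
    · apply rsgn_inj
      rw [hs, hs', hm]
    · rw [hc, hc']
  subst hcc
  rcases hh with rfl | ⟨b, hb, rfl⟩ <;> rcases hh' with rfl | ⟨b', hb', rfl⟩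
  · exact absurd rfl hne
  · refine ⟨1, one_pos, vS (negS b'), (root_iff _).2 (Or.inr ⟨_, rfl⟩), ?_⟩
    rw [vS_negS, one_smul]
    abel
  · refine ⟨1, one_pos, vS b, (root_iff _).2 (Or.inr ⟨_, rfl⟩), ?_⟩
    rw [one_smul]
    abel
  · by_cases hbb : b.2 = b'.2
    · rcases eq_or_neg _ _ hbb with h1 | h1
      · exact absurd (by rw [h1]) hne
      · refine ⟨2, two_pos, vS b, (root_iff _).2 (Or.inr ⟨_, rfl⟩), ?_⟩
        rw [h1, vS_negS, two_smul]
        abel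
    · refine ⟨1, one_pos, vS b + vS (negS b'), (root_iff _).2 (Or.inl ⟨b, negS b', hbb, rfl⟩), ?_⟩
      rw [vS_negS, one_smul]
      abel

theorem simpleRoot_of_lt {n : ℕ} (i : Fin n) (h : (i : ℕ) + 1 < n) :
    simpleRoot n i = stdB n i - stdB n ⟨i + 1, h⟩ := by
  ext j
  simp only [simpleRoot, stdB, Pi.sub_apply, Pi.single_apply, Fin.ext_iff]

theorem simpleRoot_of_eq {n : ℕ} (i : Fin n) (h : ¬ (i : ℕ) + 1 < n) :
    simpleRoot n i = stdB n i := by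
  ext j
  have : (j : ℕ) ≠ i + 1 := by have := j.2; omega
  simp [simpleRoot, stdB, Pi.single_apply, this]

theorem terminal {n : ℕ} (δ : Fin n → Fin n → ℝ) (hinj : Function.Injective δ)
    (hpos : ∀ i, δ i ∈ BnPos n)
    (hT : ∀ i k, i ≠ k → ∀ a : ℝ, 0 < a → ∀ γ ∈ BnRoots n, δ i ≠ a • γ + δ k) :
    ∃ π : Fin n ≃ Fin n, ∀ i, δ i = simpleRoot n (π i) := by
  have hT1 : ∀ i k m, δ i m = δ k m → δ i m ≠ 0 → i = k := by
    intro i k m h1 h2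
    by_contra hik
    obtain ⟨a, ha, γ, hγ, h3⟩ := diff_root (pos_root (hpos i)) (pos_root (hpos k))
      (fun h => hik (hinj h)) m h1 h2
    exact hT i k hik a ha γ hγ h3
  have hlead : ∀ i, ∃ m, δ i m = 1 ∧
      (δ i = stdB n m ∨ ∃ j, m < j ∧ ∃ t, δ i = stdB n m + rsgn t • stdB n j) := by
    intro i
    rcases hpos i with ⟨m, j, hmj, t, h⟩ | ⟨m, h⟩
    · refine ⟨m, ?_, Or.inr ⟨j, hmj, t, h⟩⟩
      simp [h, stdB, hmj.ne]
    · refine ⟨m, ?_, Or.inl h⟩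
      simp [h, stdB]
  choose lead hl1 hl2 using hlead
  have hli : Function.Injective lead := by
    intro i k h
    apply hT1 i k (lead i)
    · rw [hl1, h, hl1]
    · rw [hl1]
      exact one_ne_zero
  let π : Fin n ≃ Fin n := Equiv.ofBijective lead (Finite.injective_iff_bijective.1 hli)
  have hπ : ∀ i, π i = lead i := fun i => rfl
  have hlead' : ∀ m, lead (π.symm m) = m := fun m => by rw [← hπ, Equiv.apply_symm_apply]
  -- no second plus
  have hE : ∀ m, δ (π.symm m) = stdB n m ∨
      ∃ j, m < j ∧ δ (π.symm m) = stdB n m - stdB n j := by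
    intro m
    have h := hl2 (π.symm m)
    rw [hlead'] at h
    rcases h with h | ⟨j, hmj, t, h⟩
    · exact Or.inl h
    · right
      refine ⟨j, hmj, ?_⟩
      cases t
      · rw [h]
        simp [rsgn, sub_eq_add_neg]
      · exfalso
        have h1 : δ (π.symm m) j = 1 := by
          rw [h]
          simp [stdB, rsgn, hmj.ne']
        have h2 : δ (π.symm j) j = 1 := by
          have := hl1 (π.symm j)
          rwa [hlead'] at this
        have h3 := hT1 _ _ j (h1.trans h2.symm) (by rw [h1]; exact one_ne_zero)
        exact hmj.ne (π.symm.injective h3)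
  have hshort : ∀ m m', δ (π.symm m) = stdB n m → δ (π.symm m') = stdB n m' → m = m' := by
    intro m m' h h'
    by_contra hne
    refine hT (π.symm m) (π.symm m') (fun h => hne (π.symm.injective h)) 1 one_pos
      (vS (true, m) + vS (negS (true, m'))) ((root_iff _).2 (Or.inl ⟨_, _, hne, rfl⟩)) ?_
    rw [h, h', vS_negS, vS_true, vS_true, one_smul]
    abel
  have hlast : ∀ m : Fin n, ¬ (m : ℕ) + 1 < n → δ (π.symm m) = stdB n m := by
    intro m hm
    rcases hE m with h | ⟨j, hj, _⟩
    · exact h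
    · exfalso
      have h1 := j.2
      have h2 : (m : ℕ) < j := hj
      omega
  have hE' : ∀ m : Fin n, (m : ℕ) + 1 < n → ∃ j, m < j ∧ δ (π.symm m) = stdB n m - stdB n j := by
    intro m hm
    rcases hE m with h | h
    · exfalso
      have h1 := hshort m ⟨n - 1, by omega⟩ h (hlast _ (by simp; omega))
      have h2 := congrArg Fin.val h1
      simp at h2
      omega
    · exact h
  have hmain : ∀ d : ℕ, ∀ m : Fin n, n - m ≤ d → ∀ h : (m : ℕ) + 1 < n,
      δ (π.symm m) = stdB n m - stdB n ⟨m + 1, h⟩ := by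
    intro d
    induction d with
    | zero =>
      intro m hm h
      omega
    | succ d ih =>
      intro m hm h
      obtain ⟨j, hmj, hj⟩ := hE' m h
      have hmj' : (m : ℕ) < j := hmj
      by_cases hj1 : (j : ℕ) = m + 1
      · have : j = ⟨m + 1, h⟩ := Fin.ext hj1
        rw [hj, this]
      · exfalso
        have hjn := j.2
        have h2 : ((⟨j - 1, by omega⟩ : Fin n) : ℕ) + 1 < n := by simp; omega
        have h1 := ih ⟨j - 1, by omega⟩ (by simp; omega) h2
        have hjj : (⟨((⟨j - 1, by omega⟩ : Fin n) : ℕ) + 1, h2⟩ : Fin n) = j := by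
          apply Fin.ext
          simp
          omega
        rw [hjj] at h1
        have e1 : δ (π.symm m) j = -1 := by
          rw [hj]
          simp [stdB, hmj.ne']
        have e2 : δ (π.symm ⟨j - 1, by omega⟩) j = -1 := by
          rw [h1]
          have : j ≠ ⟨j - 1, by omega⟩ := by
            intro hh
            have := congrArg Fin.val hh
            simp at this
            omega
          simp [stdB, this]
        have h3 := hT1 _ _ j (e1.trans e2.symm) (by rw [e1]; norm_num)
        have h4 := congrArg Fin.val (π.symm.injective h3)
        simp at h4
        omega
  refine ⟨π, fun i => ?_⟩
  have hi : δ i = δ (π.symm (π i)) := by simp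
  rw [hi]
  by_cases h : ((π i : Fin n) : ℕ) + 1 < n
  · rw [simpleRoot_of_lt _ h, hmain n (π i) (by omega) h]
  · rw [simpleRoot_of_eq _ h, hlast _ h]

/-- the signed permutations on whose chamber all `β i` are positive -/
def LB {n : ℕ} (β : Fin n → Fin n → ℝ) : Finset (SIdx n ≃ SIdx n) :=
  Finset.univ.filter (fun w => IsSPerm w ∧ ∀ i, 0 < dotR (hv w) (β i))

theorem mem_LB {n : ℕ} (β : Fin n → Fin n → ℝ) (w : SIdx n ≃ SIdx n) :
    w ∈ LB β ↔ IsSPerm w ∧ ∀ i, 0 < dotR (hv w) (β i) := by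
  simp [LB]

theorem LB_nonempty {n : ℕ} (β : Fin n → Fin n → ℝ) (hβ : ∀ i, β i ∈ BnRoots n)
    (hd : (Matrix.of β).det ≠ 0) : (LB β).Nonempty := by
  have hu : IsUnit (Matrix.of β).det := isUnit_iff_ne_zero.2 hd
  let y : Fin n → ℝ := (Matrix.of β)⁻¹.mulVec (fun _ => 1)
  have hy : ∀ i, dotR y (β i) = 1 := by
    intro i
    have h1 : (Matrix.of β).mulVec y = fun _ => 1 := by
      simp only [y]
      rw [Matrix.mulVec_mulVec, Matrix.mul_nonsing_inv _ hu, Matrix.one_mulVec]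
    have h2 := congrFun h1 i
    rw [dot_comm]
    exact h2
  obtain ⟨w, hw, hdom⟩ := exists_dom y
  refine ⟨w, (mem_LB _ _).2 ⟨hw, fun i => ?_⟩⟩
  rw [hv_pos_iff hw (hβ i)]
  apply dom_pos hdom (root_act (sperm_symm hw) (hβ i))
  rw [spAct_dot (sperm_symm hw), hy]
  exact one_pos

theorem det_act {n : ℕ} {w : SIdx n ≃ SIdx n} (hw : IsSPerm w) (δ : Fin n → Fin n → ℝ) :
    |(Matrix.of (fun i => spAct w (δ i))).det| = |(Matrix.of δ).det| := by
  let W : Matrix (Fin n) (Fin n) ℝ := Matrix.of (fun i => vS (w (true, i)))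
  have h1 : Matrix.of (fun i => spAct w (δ i)) = Matrix.of δ * W := by
    ext i j
    simp [spAct, Matrix.mul_apply, W]
  have h2 : W * W.transpose = 1 := by
    ext i j
    have : (W * W.transpose) i j = dotR (vS (w (true, i))) (vS (w (true, j))) := by
      simp [Matrix.mul_apply, W, dotR]
    rw [this, Matrix.one_apply]
    split_ifs with hij
    · subst hij
      exact vS_dot_self _
    · exact vS_dot_vS _ _ (sperm_snd hw hij)
  have h3 : W.det * W.det = 1 := by
    have := congrArg Matrix.det h2
    rwa [Matrix.det_mul, Matrix.det_transpose, Matrix.det_one] at this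
  have h4 : |W.det| = 1 := by
    rcases mul_self_eq_one_iff.1 h3 with h | h <;> simp [h]
  rw [h1, Matrix.det_mul, abs_mul, h4, mul_one]

theorem det_simple (n : ℕ) : (Matrix.of (simpleRoot n)).det = 1 := by
  rw [Matrix.det_of_isUpperTriangular]
  · simp [simpleRoot]
  · intro i j hij
    have h : (j : ℕ) < i := hij
    have h1 : j ≠ i := fun hh => by rw [hh] at h; omega
    have h2 : (j : ℕ) ≠ i + 1 := by omega
    simp [simpleRoot, h1, h2]

theorem rho_simple {n : ℕ} (i : Fin n) : dotR (rho n) (simpleRoot n i) = 1 := by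
  by_cases h : (i : ℕ) + 1 < n
  · rw [simpleRoot_of_lt i h, dot_sub, dot_stdB, dot_stdB]
    simp [rho]
  · rw [simpleRoot_of_eq i h, dot_stdB]
    have : n = (i : ℕ) + 1 := by have := i.2; omega
    have h2 : (n : ℝ) = (i : ℕ) + 1 := by exact_mod_cast this
    rw [rho, h2]
    ring

theorem main {n : ℕ} (x : Fin n → ℝ) (hx : ∀ γ ∈ BnRoots n, dotR x γ ≠ 0) :
    ∀ (N : ℕ) (β : Fin n → Fin n → ℝ), (LB β).card ≤ N → (∀ i, β i ∈ BnRoots n) →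
      (Matrix.of β).det ≠ 0 →
      ∑ w ∈ LB β, ∏ j : Fin n, (dotR x (spAct w (simpleRoot n j)))⁻¹ =
        |(Matrix.of β).det| * ∏ i : Fin n, (dotR x (β i))⁻¹ := by
  intro N
  induction N with
  | zero =>
    intro β hc hβ hd
    have := (LB_nonempty β hβ hd).card_pos
    omega
  | succ N ih =>
    intro β hc hβ hd
    by_cases hT : ∀ i k, i ≠ k → ∀ a : ℝ, 0 < a → ∀ γ ∈ BnRoots n, β i ≠ a • γ + β k
    · -- terminal case
      have hinj : Function.Injective β := by
        intro i k h
        by_contra hik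
        exact hd (Matrix.det_zero_of_row_eq hik h)
      have key : ∀ w ∈ LB β, ∃ π : Fin n ≃ Fin n, ∀ i, β i = spAct w (simpleRoot n (π i)) := by
        intro w hw
        rw [mem_LB] at hw
        obtain ⟨hw, hp⟩ := hw
        obtain ⟨π, hπ⟩ := terminal (fun i => spAct w.symm (β i))
          (fun i k h => hinj (by
            have := congrArg (spAct w) h
            simpa [spAct_spAct_symm hw] using this))
          (fun i => (hv_pos_iff hw (hβ i)).1 (hp i))
          (by
            intro i k hik a ha γ hγ h
            have h1 := congrArg (spAct w) h
            simp only [spAct_add, spAct_smul, spAct_spAct_symm hw] at h1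
            exact hT i k hik a ha _ (root_act hw hγ) h1)
        refine ⟨π, fun i => ?_⟩
        rw [← hπ, spAct_spAct_symm hw]
      obtain ⟨w, hw⟩ := LB_nonempty β hβ hd
      have hsing : LB β = {w} := by
        rw [Finset.eq_singleton_iff_unique_mem]
        refine ⟨hw, fun w' hw' => ?_⟩
        have hone : ∀ v ∈ LB β, (Matrix.of β).mulVec (hv v) = fun _ => 1 := by
          intro v hv'
          obtain ⟨π, hπ⟩ := key v hv'
          ext i
          have : (Matrix.of β).mulVec (hv v) i = dotR (β i) (hv v) := rfl
          rw [this, hπ, hv, spAct_dot ((mem_LB _ _).1 hv').1, dot_comm, rho_simple]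
        apply hv_inj ((mem_LB _ _).1 hw').1 ((mem_LB _ _).1 hw).1
        have hu : IsUnit (Matrix.of β) :=
          (Matrix.isUnit_iff_isUnit_det _).2 (isUnit_iff_ne_zero.2 hd)
        exact Matrix.mulVec_injective_of_isUnit hu ((hone w' hw').trans (hone w hw).symm)
      obtain ⟨π, hπ⟩ := key w hw
      have hwS := ((mem_LB _ _).1 hw).1
      have hdet : |(Matrix.of β).det| = 1 := by
        have h1 : Matrix.of β = Matrix.of (fun i => spAct w ((fun i => simpleRoot n (π i)) i)) := by
          ext i j
          simp [hπ]
        rw [h1, det_act hwS]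
        have h2 : Matrix.of (fun i => simpleRoot n (π i)) =
            (Matrix.of (simpleRoot n)).submatrix π (Equiv.refl _) := rfl
        rw [h2, Matrix.abs_det_submatrix_equiv_equiv, det_simple, abs_one]
      rw [hsing, Finset.sum_singleton, hdet, one_mul]
      rw [← Equiv.prod_comp π]
      exact Finset.prod_congr rfl fun i _ => by rw [hπ]
    · -- splitting case
      push Not at hT
      obtain ⟨i, k, hik, a, ha, γ, hγ, hi⟩ := hT
      have hk : β k = β i - a • γ := by rw [hi]; abel
      have hd1 : (Matrix.of β).det = a * (Matrix.of (Function.update β i γ)).det := by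
        have h1 : (Matrix.detRowAlternating (R := ℝ)) (Function.update β i (a • γ + β k)) =
            a * (Matrix.detRowAlternating (R := ℝ)) (Function.update β i γ) := by
          rw [AlternatingMap.map_update_add, AlternatingMap.map_update_smul,
            AlternatingMap.map_update_self _ _ hik, add_zero, smul_eq_mul]
        rw [← hi, Function.update_eq_self] at h1
        exact h1
      have hd2 : (Matrix.of β).det = a * (Matrix.of (Function.update β k (-γ))).det := by
        have h1 : (Matrix.detRowAlternating (R := ℝ)) (Function.update β k (a • (-γ) + β i)) =
            a * (Matrix.detRowAlternating (R := ℝ)) (Function.update β k (-γ)) := by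
          rw [AlternatingMap.map_update_add, AlternatingMap.map_update_smul,
            AlternatingMap.map_update_self _ _ hik.symm, add_zero, smul_eq_mul]
        have h2 : a • (-γ) + β i = β k := by
          rw [hk, smul_neg]
          abel
        rw [h2, Function.update_eq_self] at h1
        exact h1
      have hr1 : ∀ j, Function.update β i γ j ∈ BnRoots n := by
        intro j
        by_cases hj : j = i
        · subst hj
          simpa using hγ
        · rw [Function.update_of_ne hj]
          exact hβ j
      have hr2 : ∀ j, Function.update β k (-γ) j ∈ BnRoots n := by
        intro j
        by_cases hj : j = k
        · subst hj
          simpa using root_neg hγ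
        · rw [Function.update_of_ne hj]
          exact hβ j
      have hn1 : (Matrix.of (Function.update β i γ)).det ≠ 0 := by
        intro h
        rw [h, mul_zero] at hd1
        exact hd hd1
      have hn2 : (Matrix.of (Function.update β k (-γ))).det ≠ 0 := by
        intro h
        rw [h, mul_zero] at hd2
        exact hd hd2
      have hupd : ∀ (w : SIdx n ≃ SIdx n) (m : Fin n) (v : Fin n → ℝ),
          (∀ j, 0 < dotR (hv w) (Function.update β m v j)) ↔
            0 < dotR (hv w) v ∧ ∀ j, j ≠ m → 0 < dotR (hv w) (β j) := by
        intro w m v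
        constructor
        · intro h
          refine ⟨by simpa using h m, fun j hj => ?_⟩
          have := h j
          rwa [Function.update_of_ne hj] at this
        · rintro ⟨h1, h2⟩ j
          by_cases hj : j = m
          · subst hj
            simpa using h1
          · rw [Function.update_of_ne hj]
            exact h2 j hj
      have hm1 : ∀ w, w ∈ LB (Function.update β i γ) ↔ w ∈ LB β ∧ 0 < dotR (hv w) γ := by
        intro w
        rw [mem_LB, mem_LB, hupd]
        constructor
        · rintro ⟨hw, h1, h2⟩
          refine ⟨⟨hw, fun j => ?_⟩, h1⟩
          by_cases hj : j = i
          · subst hj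
            rw [hi, dot_add, dot_smul]
            have := h2 k hik.symm
            positivity
          · exact h2 j hj
        · rintro ⟨⟨hw, h1⟩, h2⟩
          exact ⟨hw, h2, fun j _ => h1 j⟩
      have hm2 : ∀ w, w ∈ LB (Function.update β k (-γ)) ↔ w ∈ LB β ∧ ¬ 0 < dotR (hv w) γ := by
        intro w
        rw [mem_LB, mem_LB, hupd, dot_neg]
        constructor
        · rintro ⟨hw, h1, h2⟩
          refine ⟨⟨hw, fun j => ?_⟩, by linarith⟩
          by_cases hj : j = k
          · subst hj
            rw [hk, dot_sub, dot_smul]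
            have := h2 i hik
            nlinarith
          · exact h2 j hj
        · rintro ⟨⟨hw, h1⟩, h2⟩
          refine ⟨hw, ?_, fun j _ => h1 j⟩
          have := hv_ne hw hγ
          rcases lt_trichotomy (dotR (hv w) γ) 0 with h | h | h
          · linarith
          · exact absurd h this
          · exact absurd h h2
      have e1 : LB (Function.update β i γ) = (LB β).filter (fun w => 0 < dotR (hv w) γ) := by
        ext w
        rw [hm1, Finset.mem_filter]
      have e2 : LB (Function.update β k (-γ)) = (LB β).filter (fun w => ¬ 0 < dotR (hv w) γ) := by
        ext w
        rw [hm2, Finset.mem_filter]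
      have hcard := Finset.card_filter_add_card_filter_not (s := LB β)
        (fun w => 0 < dotR (hv w) γ)
      rw [← e1, ← e2] at hcard
      have c1 := (LB_nonempty _ hr1 hn1).card_pos
      have c2 := (LB_nonempty _ hr2 hn2).card_pos
      have s1 := ih _ (by omega) hr1 hn1
      have s2 := ih _ (by omega) hr2 hn2
      rw [← Finset.sum_filter_add_sum_filter_not (LB β) (fun w => 0 < dotR (hv w) γ), ← e1, ← e2,
        s1, s2]
      have hki : k ∈ Finset.univ.erase i := by simp [hik.symm]
      have hp : ∀ f : Fin n → ℝ, ∏ j, f j = f i * (f k * ∏ j ∈ (Finset.univ.erase i).erase k, f j) := by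
        intro f
        rw [Finset.mul_prod_erase _ _ hki, Finset.mul_prod_erase _ _ (Finset.mem_univ i)]
      rw [hp, hp, hp (fun j => (dotR x (β j))⁻¹)]
      have q1 : ∏ j ∈ (Finset.univ.erase i).erase k, (dotR x (Function.update β i γ j))⁻¹ =
          ∏ j ∈ (Finset.univ.erase i).erase k, (dotR x (β j))⁻¹ := by
        refine Finset.prod_congr rfl fun j hj => ?_
        simp only [Finset.mem_erase] at hj
        rw [Function.update_of_ne hj.2.1]
      have q2 : ∏ j ∈ (Finset.univ.erase i).erase k, (dotR x (Function.update β k (-γ) j))⁻¹ =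
          ∏ j ∈ (Finset.univ.erase i).erase k, (dotR x (β j))⁻¹ := by
        refine Finset.prod_congr rfl fun j hj => ?_
        simp only [Finset.mem_erase] at hj
        rw [Function.update_of_ne hj.1]
      rw [q1, q2]
      simp only [Function.update_self, Function.update_of_ne hik, Function.update_of_ne hik.symm]
      generalize ∏ j ∈ (Finset.univ.erase i).erase k, (dotR x (β j))⁻¹ = R
      have A1 : |(Matrix.of β).det| = a * |(Matrix.of (Function.update β i γ)).det| := by
        rw [hd1, abs_mul, abs_of_pos ha]
      have A2 : |(Matrix.of (Function.update β k (-γ))).det| =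
          |(Matrix.of (Function.update β i γ)).det| := by
        have : a * |(Matrix.of (Function.update β k (-γ))).det| =
            a * |(Matrix.of (Function.update β i γ)).det| := by
          rw [← A1, hd2, abs_mul, abs_of_pos ha]
        exact mul_left_cancel₀ ha.ne' this
      rw [A1, A2, dot_neg]
      have g1 := hx _ hγ
      have g2 := hx _ (hβ i)
      have g3 := hx _ (hβ k)
      have g4 : dotR x (β i) = a * dotR x γ + dotR x (β k) := by
        conv_lhs => rw [hi]
        rw [dot_add, dot_smul]
      generalize |(Matrix.of (Function.update β i γ)).det| = D
      generalize dotR x γ = u at *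
      generalize dotR x (β k) = v at *
      generalize dotR x (β i) = s at *
      field_simp
      rw [g4]
      ring

theorem exists_generic (n : ℕ) (γ : Fin n → ℝ) (h : γ ∈ BnRoots n) : dotR (rho n) γ ≠ 0 := by
  rcases pos_or_neg h with h1 | h1
  · exact (rho_dot_pos h1).ne'
  · have := rho_dot_pos h1
    rw [dot_neg] at this
    linarith

theorem roots_finite (n : ℕ) : (BnRoots n).Finite := by
  have : BnRoots n ⊆ Set.range (fun p : SIdx n × SIdx n => vS p.1 + vS p.2) ∪
      Set.range (fun a : SIdx n => vS a) := by
    intro γ hγ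
    rcases (root_iff γ).1 hγ with ⟨a, b, _, rfl⟩ | ⟨a, rfl⟩
    · exact Or.inl ⟨(a, b), rfl⟩
    · exact Or.inr ⟨a, rfl⟩
  exact Set.Finite.subset ((Set.finite_range _).union (Set.finite_range _)) this

theorem eventually_generic {n : ℕ} (x : Fin n → ℝ) :
    ∀ᶠ t : ℝ in nhdsWithin 0 {0}ᶜ, ∀ γ ∈ BnRoots n, dotR (x + t • rho n) γ ≠ 0 := by
  rw [(roots_finite n).eventually_all]
  intro γ hγ
  have hr := exists_generic n γ hγ
  have heq : ∀ t : ℝ, dotR (x + t • rho n) γ = dotR x γ + t * dotR (rho n) γ := by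
    intro t
    rw [add_dot, smul_dot]
  simp only [heq]
  by_cases h0 : dotR x γ = 0
  · filter_upwards [self_mem_nhdsWithin] with t ht
    rw [h0, zero_add]
    exact mul_ne_zero ht hr
  · apply Filter.Eventually.filter_mono nhdsWithin_le_nhds
    have hc : ContinuousAt (fun t : ℝ => dotR x γ + t * dotR (rho n) γ) 0 := by fun_prop
    apply hc.eventually_ne
    simpa using h0

end SP

theorem statement_5 (n : ℕ) (hn : 1 ≤ n) (P : Set (Fin n → ℝ)) (hP : IsSignedPoset n P)
    (β : Fin n → (Fin n → ℝ)) (hβP : ∀ i, β i ∈ P) (hβli : LinearIndependent ℝ β)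
    (hcone : rootCone P = {x | ∃ c : Fin n → ℝ, (∀ i, 0 ≤ c i) ∧ x = ∑ i, c i • β i})
    (x : Fin n → ℝ) (hx : ∀ i, 0 < dotR x (β i))
    (hx' : ∀ w ∈ linExts n P, ∀ j : Fin n, dotR x (spAct w (simpleRoot n j)) ≠ 0) :
    ∑ w ∈ linExts n P, ∏ j : Fin n, (dotR x (spAct w (simpleRoot n j)))⁻¹ =
      |(Matrix.of fun r c => β c r).det| * ∏ i : Fin n, (dotR x (β i))⁻¹ := by
  have hL : linExts n P = SP.LB β := by
    ext w
    rw [SP.mem_LB, linExts, Finset.mem_filter, SP.linExt_iff hP.1]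
    constructor
    · rintro ⟨_, hw, h⟩
      exact ⟨hw, fun i => h _ (hβP i)⟩
    · rintro ⟨hw, h⟩
      refine ⟨Finset.mem_univ _, hw, fun α hα => ?_⟩
      have hmem : α ∈ rootCone P :=
        ⟨1, fun _ => 1, fun _ => α, fun _ => zero_le_one, fun _ => hα, by simp⟩
      rw [hcone] at hmem
      obtain ⟨c, hc, hα2⟩ := hmem
      refine lt_of_le_of_ne ?_ (SP.hv_ne hw (hP.1 hα)).symm
      rw [hα2, SP.dot_sum]
      refine Finset.sum_nonneg fun i _ => ?_
      rw [SP.dot_smul]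
      exact mul_nonneg (hc i) (h i).le
  have hroots : ∀ i, β i ∈ BnRoots n := fun i => hP.1 (hβP i)
  have hdet : (Matrix.of fun r c => β c r).det = (Matrix.of β).det :=
    Matrix.det_transpose (Matrix.of β)
  have hd : (Matrix.of β).det ≠ 0 := by
    have h1 : LinearIndependent ℝ (Matrix.of β).row := hβli
    rw [Matrix.linearIndependent_rows_iff_isUnit, Matrix.isUnit_iff_isUnit_det] at h1
    exact h1.ne_zero
  rw [hdet, hL]
  rw [hL] at hx'
  have hcont : ∀ γ : Fin n → ℝ, dotR x γ ≠ 0 →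
      Filter.Tendsto (fun t : ℝ => (dotR (x + t • SP.rho n) γ)⁻¹) (nhdsWithin 0 {0}ᶜ)
        (nhds (dotR x γ)⁻¹) := by
    intro γ h0
    apply Filter.Tendsto.mono_left _ nhdsWithin_le_nhds
    have h1 : Filter.Tendsto (fun t : ℝ => dotR (x + t • SP.rho n) γ) (nhds 0)
        (nhds (dotR x γ)) := by
      have heq : (fun t : ℝ => dotR (x + t • SP.rho n) γ) =
          fun t : ℝ => dotR x γ + t * dotR (SP.rho n) γ := by
        ext t
        rw [SP.add_dot, SP.smul_dot]
      rw [heq]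
      have hc : Continuous (fun t : ℝ => dotR x γ + t * dotR (SP.rho n) γ) := by fun_prop
      have := hc.tendsto 0
      simpa using this
    exact h1.inv₀ h0
  have t1 : Filter.Tendsto (fun t : ℝ => ∑ w ∈ SP.LB β, ∏ j : Fin n,
      (dotR (x + t • SP.rho n) (spAct w (simpleRoot n j)))⁻¹) (nhdsWithin 0 {0}ᶜ)
      (nhds (∑ w ∈ SP.LB β, ∏ j : Fin n, (dotR x (spAct w (simpleRoot n j)))⁻¹)) :=
    tendsto_finsetSum _ fun w hw => tendsto_finsetProd _ fun j _ => hcont _ (hx' w hw j)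
  have t2 : Filter.Tendsto (fun t : ℝ => |(Matrix.of β).det| * ∏ i : Fin n,
      (dotR (x + t • SP.rho n) (β i))⁻¹) (nhdsWithin 0 {0}ᶜ)
      (nhds (|(Matrix.of β).det| * ∏ i : Fin n, (dotR x (β i))⁻¹)) :=
    (tendsto_finsetProd _ fun i _ => hcont _ (hx i).ne').const_mul _
  refine tendsto_nhds_unique_of_eventuallyEq t1 t2 ?_
  filter_upwards [SP.eventually_generic x] with t ht
  exact SP.main _ ht _ β le_rfl hroots hd
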